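/- For every σ ∈ ℓ²(ℤ,ℂ) and every m ∈ ℤ, the family (1 + σ_j/(j − m))_{j∈ℤ, j≠m} is multipliable, and writing ∏_{j≠m}(1 + σ_j/(j − m)) = 1 + r_m(σ), one has |r_m(σ)| ≤ 2‖σ‖ · exp(2‖σ‖). -/

import Mathlib

/-!
Cauchy–Schwarz against `∑_{j ≠ m} 1 / (j - m)² = 2 ζ(2) = π² / 3` gives
`∑_{j ≠ m} |σ j / (j - m)| ≤ (π / √3) ‖σ‖ ≤ 2 ‖σ‖`. Hence the product converges absolutely, and
expanding it shows that its distance to `1` is at most `exp (2 ‖σ‖) - 1 ≤ 2 ‖σ‖ exp (2 ‖σ‖)`.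
-/

open Real

lemma exp_sub_one_le_mul_exp (x : ℝ) : exp x - 1 ≤ x * exp x := by
  have h : (1 - x) * exp x ≤ 1 := calc
    (1 - x) * exp x ≤ exp (-x) * exp x := by gcongr; exact one_sub_le_exp_neg x
    _ = 1 := by rw [← exp_add, neg_add_cancel, exp_zero]
  linarith

lemma norm_tprod_one_add_sub_one_le_exp {ι R : Type*} [NormedCommRing R] [NormOneClass R]
    [CompleteSpace R] {f : ι → R} (hf : Summable fun i ↦ ‖f i‖) :
    ‖∏' i, (1 + f i) - 1‖ ≤ exp (∑' i, ‖f i‖) - 1 := by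
  have h_lim := ((multipliable_one_add_of_summable hf).hasProd.sub_const 1).norm
  refine le_of_tendsto h_lim (.of_forall fun t ↦ (t.norm_prod_one_add_sub_one_le f).trans ?_)
  gcongr
  exact hf.sum_le_tsum t fun i _ ↦ norm_nonneg (f i)

lemma summable_and_tsum_mul_le_sqrt_mul_sqrt {ι : Type*} {f g : ι → ℝ}
    (hf : ∀ i, 0 ≤ f i) (hg : ∀ i, 0 ≤ g i)
    (hf_sum : Summable fun i ↦ f i ^ 2) (hg_sum : Summable fun i ↦ g i ^ 2) :
    (Summable fun i ↦ f i * g i) ∧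
      ∑' i, f i * g i ≤ √(∑' i, f i ^ 2) * √(∑' i, g i ^ 2) := by
  simpa only [rpow_two, ← sqrt_eq_rpow] using
    summable_and_inner_le_Lp_mul_Lq_tsum_of_nonneg .two_two hf hg
      (by simpa only [rpow_two] using hf_sum) (by simpa only [rpow_two] using hg_sum)

lemma hasSum_int_one_div_sq : HasSum (fun n : ℤ ↦ 1 / (n : ℝ) ^ 2) (π ^ 2 / 3) := by
  have h : HasSum (fun n : ℤ ↦ 1 / (n : ℝ) ^ 2)
      (π ^ 2 / 6 + π ^ 2 / 6 - 1 / ((0 : ℤ) : ℝ) ^ 2) :=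
    HasSum.of_nat_of_neg (by simpa using hasSum_zeta_two) (by simpa using hasSum_zeta_two)
  convert h using 1
  rw [Int.cast_zero, zero_pow two_ne_zero, div_zero]
  ring

lemma hasSum_int_abs_inv_sub_sq (m : ℤ) :
    HasSum (fun j : ℤ ↦ |((j - m : ℤ) : ℝ)⁻¹| ^ 2) (π ^ 2 / 3) := by
  simpa only [Function.comp_def, Equiv.subRight_apply, one_div, sq_abs, inv_pow] using
    (Equiv.subRight m).hasSum_iff.mpr hasSum_int_one_div_sq

lemma pi_div_sqrt_three_le_two : π / √3 ≤ 2 := by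
  have h_sqrt : 1.6 ≤ √3 := le_sqrt_of_sq_le (by norm_num)
  rw [div_le_iff₀ (by positivity)]
  linarith [pi_lt_d2]

section InvSubSMul

variable {E : Type*} [SeminormedAddCommGroup E] [NormedSpace ℝ E] {σ : ℤ → E}

-- The index `j = m` contributes `0`, because `0⁻¹ = 0`.
lemma summable_and_tsum_norm_inv_sub_smul_le (hσ : Summable fun j ↦ ‖σ j‖ ^ 2) (m : ℤ) :
    (Summable fun j : ℤ ↦ ‖((j - m : ℤ) : ℝ)⁻¹ • σ j‖) ∧
      ∑' j : ℤ, ‖((j - m : ℤ) : ℝ)⁻¹ • σ j‖ ≤ π / √3 * √(∑' j, ‖σ j‖ ^ 2) := by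
  have h_weight := hasSum_int_abs_inv_sub_sq m
  have h_sqrt : √(π ^ 2 / 3) = π / √3 := by rw [sqrt_div (sq_nonneg π), sqrt_sq pi_nonneg]
  simpa only [norm_smul, norm_eq_abs, h_weight.tsum_eq, h_sqrt] using
    summable_and_tsum_mul_le_sqrt_mul_sqrt (fun _ ↦ abs_nonneg _) (fun j ↦ norm_nonneg (σ j))
      h_weight.summable hσ

lemma summable_and_tsum_ne_norm_inv_sub_smul_le (hσ : Summable fun j ↦ ‖σ j‖ ^ 2) (m : ℤ) :
    (Summable fun j : {j : ℤ // j ≠ m} ↦ ‖(((j : ℤ) - m : ℤ) : ℝ)⁻¹ • σ j‖) ∧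
      ∑' j : {j : ℤ // j ≠ m}, ‖(((j : ℤ) - m : ℤ) : ℝ)⁻¹ • σ j‖ ≤
        2 * √(∑' j, ‖σ j‖ ^ 2) := by
  obtain ⟨h_sum, h_le⟩ := summable_and_tsum_norm_inv_sub_smul_le hσ m
  refine ⟨h_sum.subtype {j | j ≠ m}, ?_⟩
  calc ∑' j : {j : ℤ // j ≠ m}, ‖(((j : ℤ) - m : ℤ) : ℝ)⁻¹ • σ j‖
      ≤ ∑' j : ℤ, ‖((j - m : ℤ) : ℝ)⁻¹ • σ j‖ :=
        h_sum.tsum_subtype_le _ {j | j ≠ m} fun _ ↦ norm_nonneg _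
    _ ≤ π / √3 * √(∑' j, ‖σ j‖ ^ 2) := h_le
    _ ≤ 2 * √(∑' j, ‖σ j‖ ^ 2) := by gcongr; exact pi_div_sqrt_three_le_two

end InvSubSMul

theorem stmt_3_general {R : Type*} [NormedCommRing R] [NormOneClass R] [NormedAlgebra ℝ R]
    [CompleteSpace R] (σ : ℤ → R) (hσ : Summable fun j ↦ ‖σ j‖ ^ 2) (m : ℤ) :
    Multipliable (fun j : {j : ℤ // j ≠ m} ↦ 1 + (((j : ℤ) - m : ℤ) : ℝ)⁻¹ • σ j) ∧
    ‖(∏' j : {j : ℤ // j ≠ m}, (1 + (((j : ℤ) - m : ℤ) : ℝ)⁻¹ • σ j)) - 1‖ ≤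
      2 * √(∑' j, ‖σ j‖ ^ 2) * exp (2 * √(∑' j, ‖σ j‖ ^ 2)) := by
  obtain ⟨h_sum, h_le⟩ := summable_and_tsum_ne_norm_inv_sub_smul_le hσ m
  refine ⟨multipliable_one_add_of_summable h_sum, ?_⟩
  calc ‖(∏' j : {j : ℤ // j ≠ m}, (1 + (((j : ℤ) - m : ℤ) : ℝ)⁻¹ • σ j)) - 1‖
      ≤ exp (∑' j : {j : ℤ // j ≠ m}, ‖(((j : ℤ) - m : ℤ) : ℝ)⁻¹ • σ j‖) - 1 :=
        norm_tprod_one_add_sub_one_le_exp h_sum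
    _ ≤ exp (2 * √(∑' j, ‖σ j‖ ^ 2)) - 1 := by gcongr
    _ ≤ 2 * √(∑' j, ‖σ j‖ ^ 2) * exp (2 * √(∑' j, ‖σ j‖ ^ 2)) := exp_sub_one_le_mul_exp _

/-- For every `σ ∈ ℓ²(ℤ,ℂ)` and every `m ∈ ℤ`, the family `(1 + σ j / (j - m))_{j ≠ m}`
is multipliable and, writing `∏_{j ≠ m} (1 + σ j / (j - m)) = 1 + r_m(σ)`, one has
`|r_m(σ)| ≤ 2‖σ‖ exp (2‖σ‖)`. -/
theorem stmt_3 (σ : ℤ → ℂ) (hσ : Summable fun j => ‖σ j‖ ^ 2) (m : ℤ) :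
    Multipliable (fun j : {j : ℤ // j ≠ m} => 1 + σ (j : ℤ) / (((j : ℤ) - m : ℤ) : ℂ)) ∧
    ‖(∏' j : {j : ℤ // j ≠ m}, (1 + σ (j : ℤ) / (((j : ℤ) - m : ℤ) : ℂ))) - 1‖ ≤
      2 * Real.sqrt (∑' j, ‖σ j‖ ^ 2) * Real.exp (2 * Real.sqrt (∑' j, ‖σ j‖ ^ 2)) := by
  simpa only [Complex.real_smul, Complex.ofReal_inv, Complex.ofReal_intCast, inv_mul_eq_div] using
    stmt_3_general σ hσ m
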